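/- Let 2 < p < 6 < q and define Φ : ℝ → ℝ by Φ(t) := (1/p)((1 + |t|^q)^{p/q} − 1). Then Φ is an N-function satisfying the Δ₂- and ∇₂-conditions globally, lim_{t→0} Φ(t)/t⁶ = lim_{|t|→∞} Φ(t)/t⁶ = 0, and lim_{|t|→∞} Φ(t)/t² = ∞. -/

import Mathlib

/-!
Write `N(t) = (1 + |t|^q)^(1/q)`, the `ℓ^q` norm of the vector `(1, t)`. By Minkowski's inequality
`N` is convex, so `N^p = (1 + |t|^q)^(p/q)` is convex for all `p, q ≥ 1`
(`convexOn_one_add_abs_rpow`); this gives the convexity of `Φ`.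

The same lemma with `(p/2, q/2)` in place of `(p, q)` shows that `Φ(t) = G(t²)` for a convex `G`
with `G(0) = 0`. Hence `Φ(2t) = G(4t²) ≥ 4 G(t²) = 4 Φ(t)`, which is the ∇₂-condition with `K' = 2`.
The Δ₂-condition, with `K = 2^q`, follows from concavity of `y ↦ (1 + y)^(p/q)`.

All limits are squeezed from three elementary bounds: `Φ(t) ≤ |t|^q` (Bernoulli),
`Φ(t) ≤ |t|^p` (subadditivity of `y ↦ y^(p/q)`), and `Φ(t) ≥ (|t|^p - 1)/p`.
-/

open MeasureTheory Filter Real Set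
open scoped RealInnerProductSpace ENNReal Topology

noncomputable section

/-- An N-function: an even convex function `Φ : ℝ → [0,∞)` vanishing exactly at `0`,
with `Φ(t)/t → 0` as `t → 0` and `Φ(t)/t → ∞` as `t → ∞`. -/
def IsNFunction (Φ : ℝ → ℝ) : Prop :=
  (∀ t, Φ (-t) = Φ t) ∧ ConvexOn ℝ Set.univ Φ ∧ (∀ t, 0 ≤ Φ t) ∧
  (∀ t, Φ t = 0 ↔ t = 0) ∧
  Tendsto (fun t => Φ t / t) (𝓝[≠] (0:ℝ)) (𝓝 0) ∧
  Tendsto (fun t => Φ t / t) atTop atTop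

/-- The global Δ₂-condition: `Φ(2t) ≤ K Φ(t)` for some `K > 1` and all `t ∈ ℝ`. -/
def Delta2 (Φ : ℝ → ℝ) : Prop := ∃ K > 1, ∀ t, Φ (2 * t) ≤ K * Φ t

/-- The global ∇₂-condition: `Φ(K't) ≥ 2K'Φ(t)` for some `K' > 1` and all `t ∈ ℝ`. -/
def Nabla2 (Φ : ℝ → ℝ) : Prop := ∃ K' > 1, ∀ t, 2 * K' * Φ t ≤ Φ (K' * t)

/-- Minkowski's inequality for the `ℓ^q` norm of the vectors `(1, t)`. -/
lemma convexOn_lq_norm (q : ℝ) (hq : 1 ≤ q) :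
    ConvexOn ℝ Set.univ (fun t : ℝ => (1 + |t| ^ q) ^ (1 / q)) := by
  refine ⟨convex_univ, fun s _ t _ α β hα hβ hαβ => ?_⟩
  have hq0 : q ≠ 0 := by positivity
  have h := Real.Lp_add_le (Finset.univ : Finset (Fin 2)) ![α, α * s] ![β, β * t] hq
  simp only [Fin.sum_univ_two, Matrix.cons_val_zero, Matrix.cons_val_one, hαβ, abs_one,
    Real.one_rpow] at h
  have scale : ∀ c x : ℝ, 0 ≤ c →
      (|c| ^ q + |c * x| ^ q) ^ (1 / q) = c * (1 + |x| ^ q) ^ (1 / q) := by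
    intro c x hc
    have hcq : (c ^ q) ^ (1 / q) = c := by
      rw [← Real.rpow_mul hc, mul_one_div_cancel hq0, Real.rpow_one]
    rw [abs_mul, abs_of_nonneg hc, Real.mul_rpow hc (abs_nonneg x),
      show c ^ q + c ^ q * |x| ^ q = c ^ q * (1 + |x| ^ q) by ring,
      Real.mul_rpow (by positivity) (by positivity), hcq]
  rw [scale α s hα, scale β t hβ] at h
  simpa only [smul_eq_mul] using h

lemma convexOn_one_add_abs_rpow (p q : ℝ) (hp : 1 ≤ p) (hq : 1 ≤ q) :
    ConvexOn ℝ Set.univ (fun t : ℝ => (1 + |t| ^ q) ^ (p / q)) := by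
  have hN := convexOn_lq_norm q hq
  have key : ∀ t : ℝ, (1 + |t| ^ q) ^ (p / q) = ((1 + |t| ^ q) ^ (1 / q)) ^ p := by
    intro t
    rw [← Real.rpow_mul (by positivity)]
    congr 1
    ring
  simp only [key]
  refine ⟨convex_univ, fun s _ t _ α β hα hβ hαβ => ?_⟩
  refine (Real.rpow_le_rpow (by positivity) (hN.2 (mem_univ s) (mem_univ t) hα hβ hαβ)
    (by linarith)).trans ?_
  exact (convexOn_rpow hp).2 (show (0:ℝ) ≤ _ by positivity) (show (0:ℝ) ≤ _ by positivity)
    hα hβ hαβ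

/-- Concavity of `y ↦ (1 + y) ^ a - 1`, which vanishes at `0`, compared at `y` and `c * y`. -/
lemma one_add_mul_rpow_sub_one_le (a c y : ℝ) (ha : 0 ≤ a) (ha1 : a ≤ 1) (hc : 1 ≤ c)
    (hy : 0 ≤ y) : (1 + c * y) ^ a - 1 ≤ c * ((1 + y) ^ a - 1) := by
  have hc0 : 0 < c := by linarith
  have hci : c⁻¹ ≤ 1 := inv_le_one_of_one_le₀ hc
  have h := (Real.concaveOn_rpow ha ha1).2 (show (0:ℝ) ≤ 1 + c * y by positivity)
    (show (0:ℝ) ≤ 1 by norm_num) (show 0 ≤ c⁻¹ by positivity) (show 0 ≤ 1 - c⁻¹ by linarith)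
    (by ring)
  simp only [smul_eq_mul, Real.one_rpow] at h
  have e : c⁻¹ * (1 + c * y) + (1 - c⁻¹) * 1 = 1 + y := by field_simp; ring
  rw [e] at h
  have h2 := mul_le_mul_of_nonneg_left h hc0.le
  have e2 : c * (c⁻¹ * (1 + c * y) ^ a + (1 - c⁻¹) * 1) = (1 + c * y) ^ a + (c - 1) := by
    field_simp
  rw [e2] at h2
  linarith

/-- The model nonlinearity `Φ(t) = (1/p)((1 + |t|^q)^{p/q} - 1)` with `2 < p < 6 < q`
is an N-function satisfying the Δ₂- and
∇₂-conditions globally, with `Φ(t)/t⁶ → 0` as `t → 0` and as `|t| → ∞`, and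
`Φ(t)/t² → ∞` as `|t| → ∞`. -/
theorem model_interpolated_power_nonlinearity (p q : ℝ) (hp : 2 < p) (hp6 : p < 6) (hq : 6 < q)
    (Φ : ℝ → ℝ)
    (hΦdef : ∀ t, Φ t = (1/p) * ((1 + |t| ^ q) ^ (p/q) - 1)) :
    IsNFunction Φ ∧ Delta2 Φ ∧ Nabla2 Φ ∧
    Tendsto (fun t => Φ t / t ^ 6) (𝓝[≠] (0:ℝ)) (𝓝 0) ∧
    Tendsto (fun t => Φ t / t ^ 6) (cocompact ℝ) (𝓝 0) ∧
    Tendsto (fun t => Φ t / t ^ 2) (cocompact ℝ) atTop := by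
  have hp0 : 0 < p := by linarith
  have hq0 : 0 < q := by linarith
  have ha0 : 0 < p / q := by positivity
  have ha1 : p / q ≤ 1 := by rw [div_le_one hq0]; linarith
  have hpinv : 1 / p ≤ 1 := by rw [div_le_one hp0]; linarith
  have hpow : ∀ t : ℝ, (|t| ^ q) ^ (p / q) = |t| ^ p := by
    intro t
    rw [← Real.rpow_mul (abs_nonneg t), mul_div_cancel₀ _ hq0.ne']
  have hge1 : ∀ t : ℝ, 1 ≤ (1 + |t| ^ q) ^ (p / q) := fun t =>
    Real.one_le_rpow (by have : 0 ≤ |t| ^ q := by positivity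
                         linarith) ha0.le
  have hnn : ∀ t, 0 ≤ Φ t := fun t => by
    rw [hΦdef]
    exact mul_nonneg (by positivity) (by linarith [hge1 t])
  have h00 : Φ 0 = 0 := by
    rw [hΦdef]; simp [Real.zero_rpow hq0.ne']
  have hupq : ∀ t, Φ t ≤ |t| ^ q := fun t => by
    rw [hΦdef]
    have hy : 0 ≤ |t| ^ q := by positivity
    have h := rpow_one_add_le_one_add_mul_self (s := |t| ^ q) (by linarith) ha0.le ha1
    have h1 : (1 + |t| ^ q) ^ (p / q) - 1 ≤ |t| ^ q := by nlinarith
    have h2 := hge1 t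
    calc (1/p) * ((1 + |t| ^ q) ^ (p/q) - 1) ≤ 1 * ((1 + |t| ^ q) ^ (p/q) - 1) :=
          mul_le_mul_of_nonneg_right hpinv (by linarith)
      _ ≤ |t| ^ q := by linarith
  have hupp : ∀ t, Φ t ≤ |t| ^ p := fun t => by
    rw [hΦdef]
    have hy : 0 ≤ |t| ^ q := by positivity
    have h := Real.rpow_add_le_add_rpow (zero_le_one (α := ℝ)) hy ha0.le ha1
    rw [hpow, Real.one_rpow] at h
    have h2 := hge1 t
    calc (1/p) * ((1 + |t| ^ q) ^ (p/q) - 1) ≤ 1 * ((1 + |t| ^ q) ^ (p/q) - 1) :=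
          mul_le_mul_of_nonneg_right hpinv (by linarith)
      _ ≤ |t| ^ p := by linarith
  have hlow : ∀ t, (1/p) * (|t| ^ p - 1) ≤ Φ t := fun t => by
    rw [hΦdef, ← hpow t]
    have h : (|t| ^ q) ^ (p / q) ≤ (1 + |t| ^ q) ^ (p / q) :=
      Real.rpow_le_rpow (by positivity) (by linarith) ha0.le
    exact mul_le_mul_of_nonneg_left (by linarith) (by positivity)
  have habs0 : Tendsto (fun t : ℝ => |t|) (𝓝[≠] 0) (𝓝 0) := by
    have : Tendsto (fun t : ℝ => |t|) (𝓝 0) (𝓝 |0|) := continuous_abs.tendsto 0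
    rw [abs_zero] at this
    exact this.mono_left nhdsWithin_le_nhds
  have hpow0 : ∀ r : ℝ, 0 < r → Tendsto (fun t : ℝ => |t| ^ r) (𝓝[≠] 0) (𝓝 0) := by
    intro r hr
    have := habs0.rpow_const (p := r) (Or.inr hr.le)
    rwa [Real.zero_rpow hr.ne'] at this
  have habsI : Tendsto (fun t : ℝ => |t|) (cocompact ℝ) atTop :=
    tendsto_norm_cocompact_atTop (E := ℝ)
  have hsix : ∀ t : ℝ, t ^ 6 = |t| ^ (6:ℝ) := fun t => by
    rw [show (6:ℝ) = ((6:ℕ):ℝ) by norm_num, Real.rpow_natCast, Even.pow_abs ⟨3, rfl⟩]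
  have htwo : ∀ t : ℝ, t ^ 2 = |t| ^ (2:ℝ) := fun t => by
    rw [show (2:ℝ) = ((2:ℕ):ℝ) by norm_num, Real.rpow_natCast, Even.pow_abs ⟨1, rfl⟩]
  have hquad : Tendsto (fun t => Φ t / t ^ 2) (cocompact ℝ) atTop := by
    have h1 : Tendsto (fun t : ℝ => (1/p) * (|t| ^ (p - 2) - 1)) (cocompact ℝ) atTop := by
      refine Tendsto.const_mul_atTop (by positivity) ?_
      exact tendsto_atTop_add_const_right _ (-1)
        ((tendsto_rpow_atTop (by linarith : 0 < p - 2)).comp habsI)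
    refine tendsto_atTop_mono' _ ?_ h1
    filter_upwards [habsI.eventually_ge_atTop 1] with t ht
    have ht0 : 0 < |t| := by linarith
    have hsq : 1 ≤ t ^ 2 := by rw [← sq_abs]; nlinarith
    rw [le_div_iff₀ (by linarith), Real.rpow_sub ht0, ← htwo]
    refine le_trans ?_ (hlow t)
    rw [mul_assoc]
    refine mul_le_mul_of_nonneg_left ?_ (by positivity)
    rw [sub_mul, div_mul_cancel₀ _ (by linarith)]
    linarith
  refine ⟨⟨?_, ?_, hnn, ?_, ?_, ?_⟩, ?_, ?_, ?_, ?_, hquad⟩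
  · intro t
    rw [hΦdef, hΦdef, abs_neg]
  · have h := ((convexOn_one_add_abs_rpow p q (by linarith) (by linarith)).add_const (-1)).smul
      (show 0 ≤ 1 / p by positivity)
    refine h.congr fun t _ => ?_
    simp [hΦdef, sub_eq_add_neg]
  · refine fun t => ⟨fun h => ?_, fun h => h ▸ h00⟩
    by_contra ht
    have hy : 0 < |t| ^ q := Real.rpow_pos_of_pos (abs_pos.mpr ht) q
    have h1 : 1 < (1 + |t| ^ q) ^ (p / q) := Real.one_lt_rpow (by linarith) ha0
    rw [hΦdef] at h
    have : 0 < (1/p) * ((1 + |t| ^ q) ^ (p/q) - 1) := mul_pos (by positivity) (by linarith)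
    linarith
  · refine squeeze_zero_norm' ?_ (hpow0 (q - 1) (by linarith))
    filter_upwards [self_mem_nhdsWithin] with t ht
    have ht0 : 0 < |t| := abs_pos.mpr ht
    rw [norm_div, Real.norm_eq_abs, Real.norm_eq_abs, abs_of_nonneg (hnn t),
      Real.rpow_sub_one ht0.ne']
    exact div_le_div_of_nonneg_right (hupq t) ht0.le
  · -- For `t ≥ 1` the quotient `Φ t / t` dominates `Φ t / t ^ 2`.
    refine tendsto_atTop_mono' _ ?_ (hquad.mono_left atTop_le_cocompact)
    filter_upwards [eventually_ge_atTop 1] with t ht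
    exact div_le_div_of_nonneg_left (hnn t) (by linarith) (by nlinarith)
  · have h2q : (1:ℝ) < 2 ^ q := Real.one_lt_rpow (by norm_num) hq0
    refine ⟨2 ^ q, h2q, fun t => ?_⟩
    have h := one_add_mul_rpow_sub_one_le (p / q) (2 ^ q) (|t| ^ q) ha0.le ha1 h2q.le
      (by positivity)
    rw [hΦdef, hΦdef, abs_mul, abs_two, Real.mul_rpow (by norm_num) (abs_nonneg t), mul_left_comm]
    exact mul_le_mul_of_nonneg_left h (by positivity)
  · refine ⟨2, by norm_num, fun t => ?_⟩
    -- Convexity along the segment from `0` to `4 t²`, which meets `t²` at one quarter.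
    have h := (convexOn_one_add_abs_rpow (p / 2) (q / 2) (by linarith) (by linarith)).2
      (mem_univ ((2 * t) ^ 2)) (mem_univ 0) (show (0:ℝ) ≤ 1 / 4 by norm_num)
      (show (0:ℝ) ≤ 3 / 4 by norm_num) (by norm_num)
    have hhalf : ∀ s : ℝ, |s ^ 2| ^ (q / 2) = |s| ^ q := by
      intro s
      rw [abs_of_nonneg (sq_nonneg s), htwo, ← Real.rpow_mul (abs_nonneg s)]
      congr 1
      ring
    have e : 1 / 4 * (2 * t) ^ 2 + 3 / 4 * 0 = t ^ 2 := by ring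
    have hpq : p / 2 / (q / 2) = p / q := by field_simp
    simp only [smul_eq_mul, e, hhalf, hpq, abs_zero,
      Real.zero_rpow (by positivity : q / 2 ≠ 0), add_zero, Real.one_rpow] at h
    rw [hΦdef, hΦdef, mul_left_comm]
    exact mul_le_mul_of_nonneg_left (by linarith) (by positivity)
  · refine squeeze_zero' (Eventually.of_forall fun t => div_nonneg (hnn t) (by positivity)) ?_
      (hpow0 (q - 6) (by linarith))
    filter_upwards [self_mem_nhdsWithin] with t ht
    have ht0 : 0 < |t| := abs_pos.mpr ht
    rw [Real.rpow_sub ht0, hsix]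
    exact div_le_div_of_nonneg_right (hupq t) (by positivity)
  · have hlim : Tendsto (fun t : ℝ => |t| ^ (-(6 - p))) (cocompact ℝ) (𝓝 0) :=
      (tendsto_rpow_neg_atTop (by linarith : 0 < 6 - p)).comp habsI
    refine squeeze_zero' (Eventually.of_forall fun t => div_nonneg (hnn t) (by positivity)) ?_ hlim
    filter_upwards [habsI.eventually_ge_atTop 1] with t ht
    have ht0 : 0 < |t| := by linarith
    rw [neg_sub, Real.rpow_sub ht0, hsix]
    exact div_le_div_of_nonneg_right (hupp t) (by positivity)
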